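/- Let T₁, T₂ be non-crossing spanning trees on n points in convex position such that T₁ is a Hamiltonian path. Then there is a flip sequence between T₁ and T₂ of length at most (3/2) n. -/

import Mathlib

open Finset

/-- An edge (chord) on `n` points in convex position, as an unordered pair of indices. -/
abbrev Edge (n : ℕ) := Sym2 (Fin n)

/-- The cyclic successor of a point. -/
def next {n : ℕ} (i : Fin n) : Fin n := ⟨((i : ℕ) + 1) % n, Nat.mod_lt _ i.pos⟩


/-- Chords `{a,b}` (with `a<b`) and `{c,d}` (with `c<d`) cross iff
`a<c<b<d` or `c<a<d<b`. -/
def Cross {n : ℕ} (e f : Edge n) : Prop :=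
  ∃ a b c d : Fin n, e = s(a, b) ∧ f = s(c, d) ∧ a < b ∧ c < d ∧
    ((a < c ∧ c < b ∧ b < d) ∨ (c < a ∧ a < d ∧ d < b))

/-- A set of chords is non-crossing if no two of its chords cross. -/
def NonCrossing {n : ℕ} (E : Finset (Edge n)) : Prop :=
  ∀ e ∈ E, ∀ f ∈ E, ¬ Cross e f

/-- A border edge joins two cyclically consecutive points (this includes `{n-1, 0}`,
i.e. `{v_n, v_1}`, since addition in `Fin n` wraps around). -/
def IsBorder {n : ℕ} (e : Edge n) : Prop := ∃ i : Fin n, e = s(i, next i)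

/-- A spanning tree on the `n` points, given by its edge set: loopless, connected,
with `n - 1` edges. -/
def IsSpanningTree {n : ℕ} (T : Finset (Edge n)) : Prop :=
  (SimpleGraph.fromEdgeSet (T : Set (Edge n))).Connected ∧
    T.card = n - 1 ∧ ∀ e ∈ T, ¬ e.IsDiag

/-- A non-crossing spanning tree. -/
def NCST {n : ℕ} (T : Finset (Edge n)) : Prop := IsSpanningTree T ∧ NonCrossing T

/-- A flip removes one edge and adds another so that the result is again a
non-crossing spanning tree. -/
def Flip {n : ℕ} (T T' : Finset (Edge n)) : Prop :=
  NCST T ∧ NCST T' ∧ ∃ e ∈ T, ∃ f, f ∉ T ∧ T' = insert f (T.erase e)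

/-- A flip sequence of length `k` from `T₁` to `T₂`. -/
def FlipSeq {n : ℕ} (T₁ T₂ : Finset (Edge n)) (k : ℕ) : Prop :=
  ∃ f : ℕ → Finset (Edge n), f 0 = T₁ ∧ f k = T₂ ∧ ∀ i < k, Flip (f i) (f (i + 1))

/-- There is a flip sequence from `T₁` to `T₂` of length at most `m`. -/
def FlipDistLE {n : ℕ} (T₁ T₂ : Finset (Edge n)) (m : ℕ) : Prop :=
  ∃ k ≤ m, FlipSeq T₁ T₂ k


/-- Reachability using the edges of `E`. -/
def Rch {n : ℕ} (E : Finset (Edge n)) (u v : Fin n) : Prop :=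
  (SimpleGraph.fromEdgeSet (E : Set (Edge n))).Reachable u v

lemma Rch.refl {n : ℕ} (E : Finset (Edge n)) (u : Fin n) : Rch E u u :=
  SimpleGraph.Reachable.refl u

lemma Rch.symm {n : ℕ} {E : Finset (Edge n)} {u v : Fin n} (h : Rch E u v) : Rch E v u :=
  SimpleGraph.Reachable.symm h

lemma Rch.trans {n : ℕ} {E : Finset (Edge n)} {u v w : Fin n} (h : Rch E u v)
    (h' : Rch E v w) : Rch E u w :=
  SimpleGraph.Reachable.trans h h'

lemma Rch.mono {n : ℕ} {E E' : Finset (Edge n)} (hE : E ⊆ E') {u v : Fin n} (h : Rch E u v) :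
    Rch E' u v :=
  SimpleGraph.Reachable.mono (SimpleGraph.fromEdgeSet_mono (by exact_mod_cast hE)) h

lemma Rch.edge {n : ℕ} {E : Finset (Edge n)} {u v : Fin n} (h : s(u, v) ∈ E) : Rch E u v := by
  by_cases huv : u = v
  · subst huv; exact Rch.refl _ _
  · apply SimpleGraph.Adj.reachable
    rw [SimpleGraph.fromEdgeSet_adj]
    exact ⟨by exact_mod_cast h, huv⟩

lemma Rch.split {n : ℕ} {E E' : Finset (Edge n)} {a b : Fin n}
    (hE : ∀ e ∈ E, e ≠ s(a, b) → e ∈ E') {c d : Fin n} (h : Rch E c d) :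
    Rch E' c d ∨ (Rch E' c a ∧ Rch E' b d) ∨ (Rch E' c b ∧ Rch E' a d) := by
  obtain ⟨w⟩ := h
  induction w with
  | nil => exact Or.inl (Rch.refl _ _)
  | @cons p q t hadj _ ih =>
    rw [SimpleGraph.fromEdgeSet_adj] at hadj
    have hm : s(p, q) ∈ E := by exact_mod_cast hadj.1
    by_cases he : s(p, q) = s(a, b)
    · rcases Sym2.eq_iff.1 he with ⟨rfl, rfl⟩ | ⟨rfl, rfl⟩
      · rcases ih with h | ⟨h1, h2⟩ | ⟨h1, h2⟩
        · exact Or.inr (Or.inl ⟨Rch.refl _ _, h⟩)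
        · exact Or.inr (Or.inl ⟨Rch.refl _ _, h2⟩)
        · exact Or.inl h2
      · rcases ih with h | ⟨h1, h2⟩ | ⟨h1, h2⟩
        · exact Or.inr (Or.inr ⟨Rch.refl _ _, h⟩)
        · exact Or.inl h2
        · exact Or.inr (Or.inr ⟨Rch.refl _ _, h2⟩)
    · have hpq := Rch.edge (hE _ hm he)
      rcases ih with h | ⟨h1, h2⟩ | ⟨h1, h2⟩
      · exact Or.inl (hpq.trans h)
      · exact Or.inr (Or.inl ⟨hpq.trans h1, h2⟩)
      · exact Or.inr (Or.inr ⟨hpq.trans h1, h2⟩)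

lemma edgeFinset_card_le {n : ℕ} (E : Finset (Edge n))
    (h : (SimpleGraph.fromEdgeSet (E : Set (Edge n))).Connected) : n ≤ E.card + 1 := by
  have h1 := h.card_vert_le_card_edgeSet_add_one
  have h2 : Nat.card (SimpleGraph.fromEdgeSet (E : Set (Edge n))).edgeSet ≤ E.card := by
    rw [SimpleGraph.edgeSet_fromEdgeSet, Nat.card_coe_set_eq]
    calc ((E : Set (Edge n)) \ Sym2.diagSet).ncard ≤ (E : Set (Edge n)).ncard :=
          Set.ncard_le_ncard Set.sdiff_subset (Finset.finite_toSet E)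
      _ = E.card := Set.ncard_coe_finset E
  rw [Nat.card_eq_fintype_card, Fintype.card_fin] at h1
  omega

lemma tree_bridge {n : ℕ} {T : Finset (Edge n)} (hT : IsSpanningTree T) {a b : Fin n}
    (hab : s(a, b) ∈ T) : ¬ Rch (T.erase s(a, b)) a b := by
  intro h
  obtain ⟨hc, hcard, _⟩ := hT
  have hsub : ∀ e ∈ T, e ≠ s(a, b) → e ∈ T.erase s(a, b) := fun e he hne =>
    Finset.mem_erase.2 ⟨hne, he⟩
  have hconn : (SimpleGraph.fromEdgeSet ((T.erase s(a, b) : Finset (Edge n)) : Set (Edge n))).Connected := by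
    have := hc.nonempty
    refine ⟨fun u v => ?_⟩
    have huv : Rch T u v := hc.preconnected u v
    show Rch _ u v
    rcases huv.split hsub with h' | ⟨h1, h2⟩ | ⟨h1, h2⟩
    · exact h'
    · exact (h1.trans h).trans h2
    · exact (h1.trans h.symm).trans h2
  have := edgeFinset_card_le _ hconn
  rw [Finset.card_erase_of_mem hab] at this
  have : 0 < T.card := Finset.card_pos.2 ⟨_, hab⟩
  omega

lemma Cross.symm {n : ℕ} {e f : Edge n} (h : Cross e f) : Cross f e := by
  obtain ⟨a, b, c, d, h1, h2, h3, h4, h5⟩ := h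
  exact ⟨c, d, a, b, h2, h1, h4, h3, h5.symm⟩

lemma Cross.irrefl {n : ℕ} (e : Edge n) : ¬ Cross e e := by
  rintro ⟨a, b, c, d, h1, h2, h3, h4, h5⟩
  rw [h1] at h2
  rcases Sym2.eq_iff.1 h2 with ⟨rfl, rfl⟩ | ⟨rfl, rfl⟩
  · rcases h5 with h | h
    · exact absurd h.1 (lt_irrefl _)
    · exact absurd h.1 (lt_irrefl _)
  · exact absurd (h3.trans h4) (lt_irrefl _)

/-- Exchanging an edge across the cut it defines. -/
lemma swap_flip {n : ℕ} {T : Finset (Edge n)} (hT : NCST T) {a b c d : Fin n}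
    (hab : s(a, b) ∈ T) (hne : s(c, d) ≠ s(a, b)) (hcd : ¬ Rch (T.erase s(a, b)) c d)
    (hcr : ∀ e ∈ T, ¬ Cross s(c, d) e) :
    Flip T (insert s(c, d) (T.erase s(a, b))) := by
  have hnot' : s(c, d) ∉ T.erase s(a, b) := fun h => hcd (Rch.edge h)
  have hnot : s(c, d) ∉ T := fun h => hnot' (Finset.mem_erase.2 ⟨hne, h⟩)
  have hsub : ∀ e ∈ T, e ≠ s(a, b) → e ∈ T.erase s(a, b) := fun e he hne =>
    Finset.mem_erase.2 ⟨hne, he⟩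
  have hm : T.erase s(a, b) ⊆ insert s(c, d) (T.erase s(a, b)) := Finset.subset_insert _ _
  refine ⟨hT, ⟨⟨?_, ?_, ?_⟩, ?_⟩, s(a, b), hab, s(c, d), hnot, rfl⟩
  · have := hT.1.1.nonempty
    have hcd' : Rch (insert s(c, d) (T.erase s(a, b))) c d := Rch.edge (Finset.mem_insert_self _ _)
    have hab' : Rch (insert s(c, d) (T.erase s(a, b))) a b := by
      have h0 : Rch T c d := hT.1.1.preconnected c d
      rcases h0.split hsub with h' | ⟨h1, h2⟩ | ⟨h1, h2⟩
      · exact absurd h' hcd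
      · exact ((h1.mono hm).symm.trans hcd').trans (h2.mono hm).symm
      · exact ((h2.mono hm).trans hcd'.symm).trans (h1.mono hm)
    refine ⟨fun u v => ?_⟩
    have huv : Rch T u v := hT.1.1.preconnected u v
    show Rch _ u v
    rcases huv.split hsub with h' | ⟨h1, h2⟩ | ⟨h1, h2⟩
    · exact h'.mono hm
    · exact ((h1.mono hm).trans hab').trans (h2.mono hm)
    · exact ((h1.mono hm).trans hab'.symm).trans (h2.mono hm)
  · rw [Finset.card_insert_of_notMem hnot', Finset.card_erase_of_mem hab]
    have : 0 < T.card := Finset.card_pos.2 ⟨_, hab⟩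
    have := hT.1.2.1
    omega
  · intro e he
    rcases Finset.mem_insert.1 he with rfl | he
    · intro hd
      rw [Sym2.mk_isDiag_iff] at hd
      subst hd
      exact hcd (Rch.refl _ _)
    · exact hT.1.2.2 e (Finset.mem_of_mem_erase he)
  · intro e he f hf
    rcases Finset.mem_insert.1 he with rfl | he <;> rcases Finset.mem_insert.1 hf with rfl | hf
    · exact Cross.irrefl _
    · exact hcr f (Finset.mem_of_mem_erase hf)
    · exact fun h => hcr e (Finset.mem_of_mem_erase he) h.symm
    · exact hT.2 e (Finset.mem_of_mem_erase he) f (Finset.mem_of_mem_erase hf)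

/-- All vertices of rank `≥ j` are connected by `E`. -/
def Tail {n : ℕ} (r : Fin n → ℕ) (E : Finset (Edge n)) (j : ℕ) : Prop :=
  ∀ p q, j ≤ r p → j ≤ r q → Rch E p q

lemma tail_exch {n : ℕ} {r : Fin n → ℕ} {T : Finset (Edge n)} (hT : NCST T) {a b c d : Fin n}
    (hab : s(a, b) ∈ T) (hcd : ¬ Rch (T.erase s(a, b)) c d) (hr : r c < r d)
    (htail : Tail r (T.erase s(a, b)) (r c + 1)) {e : Edge n}
    (hfe : s(c, d) ≠ e) {j : ℕ} (hj : Tail r (T.erase e) j) :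
    Tail r ((insert s(c, d) (T.erase s(a, b))).erase e) j := by
  set E0 := (T.erase s(a, b)).erase e with hE0
  have hsub : ∀ g ∈ T.erase e, g ≠ s(a, b) → g ∈ E0 := fun g hg hne => by
    simp only [hE0, Finset.mem_erase] at hg ⊢; tauto
  have hm : E0 ⊆ (insert s(c, d) (T.erase s(a, b))).erase e :=
    Finset.erase_subset_erase _ (Finset.subset_insert _ _)
  have hm0 : E0 ⊆ T.erase s(a, b) := Finset.erase_subset _ _
  have hbr := tree_bridge hT.1 hab
  intro p q hp hq
  by_cases hjc : j ≤ r c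
  · have hcd' : Rch ((insert s(c, d) (T.erase s(a, b))).erase e) c d :=
      Rch.edge (Finset.mem_erase.2 ⟨hfe, Finset.mem_insert_self _ _⟩)
    have hab' : Rch ((insert s(c, d) (T.erase s(a, b))).erase e) a b := by
      rcases (hj c d hjc (by omega)).split hsub with h' | ⟨h1, h2⟩ | ⟨h1, h2⟩
      · exact absurd (h'.mono hm0) hcd
      · exact ((h1.mono hm).symm.trans hcd').trans (h2.mono hm).symm
      · exact ((h2.mono hm).trans hcd'.symm).trans (h1.mono hm)
    rcases (hj p q hp hq).split hsub with h' | ⟨h1, h2⟩ | ⟨h1, h2⟩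
    · exact h'.mono hm
    · exact ((h1.mono hm).trans hab').trans (h2.mono hm)
    · exact ((h1.mono hm).trans hab'.symm).trans (h2.mono hm)
  · have hpq := htail p q (by omega) (by omega)
    rcases (hj p q hp hq).split hsub with h' | ⟨h1, h2⟩ | ⟨h1, h2⟩
    · exact h'.mono hm
    · exact absurd (((h1.mono hm0).symm.trans hpq).trans (h2.mono hm0).symm) hbr
    · exact absurd (((h1.mono hm0).symm.trans hpq).trans (h2.mono hm0).symm).symm hbr

/-- The properties of the ranking given by a non-crossing Hamiltonian path. -/
structure PathRank {n : ℕ} (r : Fin n → ℕ) : Prop where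
  inj : Function.Injective r
  lt : ∀ v, r v < n
  surj : ∀ i < n, ∃ v, r v = i
  path : ∀ u v a b, r v = r u + 1 → r b = r a + 1 → ¬ Cross s(u, v) s(a, b)

/-- The invariant. -/
def FInv {n : ℕ} (r : Fin n → ℕ) (T₂ : Finset (Edge n)) (i : ℕ) (T : Finset (Edge n)) : Prop :=
  NCST T ∧ ∀ u v, s(u, v) ∈ T → r u < r v →
    (r u ≤ i ∧ r v = r u + 1) ∨
      (i ≤ r u ∧ (s(u, v) ∈ T₂ ∨ Tail r (T.erase s(u, v)) (r u + 1)))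

/-- The vertices still to be disconnected from the vertex `w`. -/
def Bad {n : ℕ} (r : Fin n → ℕ) (T : Finset (Edge n)) (w : Fin n) : Finset (Fin n) :=
  Finset.univ.filter (fun v => r w + 1 < r v ∧ s(w, v) ∈ T)

/-- Forward neighbours. -/
def Fwd {n : ℕ} (r : Fin n → ℕ) (T : Finset (Edge n)) (w : Fin n) : Finset (Fin n) :=
  Finset.univ.filter (fun v => r w < r v ∧ s(w, v) ∈ T)

lemma step_edge {n : ℕ} {r : Fin n → ℕ} (hr : PathRank r)
    (hb : ∀ u v a b, r v = r u + 1 → r u ≤ r a → r u ≤ r b → ¬ Cross s(u, v) s(a, b))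
    (hB : ∀ u, r u + 1 < n → ∃ p, r u < r p ∧ ∀ e, ¬ Cross s(u, p) e)
    {T₂ T : Finset (Edge n)} {w v : Fin n} (hI : FInv r T₂ (r w) T) (hv : v ∈ Bad r T w) :
    ∃ T', Flip T T' ∧ FInv r T₂ (r w) T' ∧ (Bad r T' w) ⊆ (Bad r T w).erase v := by
  obtain ⟨hT, hI⟩ := hI
  simp only [Bad, Finset.mem_filter, Finset.mem_univ, true_and] at hv
  obtain ⟨hwv, hmem⟩ := hv
  have hbr := tree_bridge hT.1 hmem
  -- the largest `j` for which the tail is split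
  have hex : ∃ m, Tail r (T.erase s(w, v)) m := ⟨n, fun p q hp _ => absurd (hr.lt p) (by omega)⟩
  classical
  set m := Nat.find hex with hmdef
  have hm : Tail r (T.erase s(w, v)) m := Nat.find_spec hex
  have hmw : r w < m := by
    by_contra hlt
    exact hbr (hm w v (by omega) (by omega))
  have hm1 : ¬ Tail r (T.erase s(w, v)) (m - 1) := Nat.find_min hex (by omega)
  have hmn : m < n := by
    by_contra hge
    apply hm1
    intro p q hp hq
    have hp' := hr.lt p
    have hq' := hr.lt q
    have : p = q := hr.inj (by omega)
    subst this
    exact Rch.refl _ _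
  obtain ⟨c, hc⟩ := hr.surj (m - 1) (by omega)
  have hsep : ∀ d, r c < r d → ¬ Rch (T.erase s(w, v)) c d := by
    intro d hd hcd
    have key : ∀ p, m - 1 ≤ r p → Rch (T.erase s(w, v)) p d := by
      intro p hp
      by_cases hpc : r p = r c
      · rw [hr.inj hpc]; exact hcd
      · exact hm p d (by omega) (by omega)
    exact hm1 fun p q hp hq => (key p hp).trans (key q hq).symm
  -- the edge to insert
  obtain ⟨d, hd, hdcr, hdw⟩ : ∃ d, r c < r d ∧ (∀ e ∈ T, ¬ Cross s(c, d) e) ∧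
      (r c = r w → r d = r w + 1) := by
    by_cases hcw : r c = r w
    · obtain ⟨d, hd⟩ := hr.surj m hmn
      refine ⟨d, by omega, ?_, fun _ => by omega⟩
      have hcw' : c = w := hr.inj hcw
      subst hcw'
      have aux : ∀ p q, s(p, q) ∈ T → r p < r q → ¬ Cross s(c, d) s(p, q) := by
        intro p q hpq hlt
        rcases hI p q hpq hlt with ⟨h1, h2⟩ | ⟨h1, -⟩
        · exact hr.path _ _ _ _ (by omega) h2
        · exact hb _ _ _ _ (by omega) h1 (by omega)
      intro e he
      obtain ⟨⟨p, q⟩, rfl⟩ := Quot.exists_rep e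
      change s(p, q) ∈ T at he
      change ¬ Cross s(c, d) s(p, q)
      rcases lt_trichotomy (r p) (r q) with h | h | h
      · exact aux p q he h
      · have := hr.inj h
        subst this
        exact absurd (by simp) (hT.1.2.2 _ he)
      · rw [Sym2.eq_swap (a := p)] at he ⊢
        exact aux q p he h
    · obtain ⟨p, hp, hpc⟩ := hB c (by omega)
      exact ⟨p, hp, fun e _ => hpc e, fun h => absurd h hcw⟩
  have hcw : r w ≤ r c := by omega
  have hne : s(c, d) ≠ s(w, v) := by
    intro h
    rcases Sym2.eq_iff.1 h with ⟨rfl, rfl⟩ | ⟨rfl, rfl⟩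
    · have := hdw rfl; omega
    · omega
  have hmc : r c + 1 = m := by omega
  have hflip := swap_flip hT hmem hne (hsep d hd) hdcr
  refine ⟨_, hflip, ⟨hflip.2.1, ?_⟩, ?_⟩
  · intro p q hpq hlt
    by_cases hpe : s(p, q) = s(c, d)
    · rcases Sym2.eq_iff.1 hpe with ⟨rfl, rfl⟩ | ⟨rfl, rfl⟩
      · by_cases hpw : r p = r w
        · left; have := hdw hpw; omega
        · right
          refine ⟨hcw, Or.inr ?_⟩
          rw [Finset.erase_insert (fun h => hsep _ hd (Rch.edge h)), hmc]
          exact hm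
      · omega
    · have hpq1 : s(p, q) ∈ T.erase s(w, v) := by
        rcases Finset.mem_insert.1 hpq with h | h
        · exact absurd h hpe
        · exact h
      rcases hI p q (Finset.mem_of_mem_erase hpq1) hlt with h | ⟨h1, h2 | h2⟩
      · exact Or.inl h
      · exact Or.inr ⟨h1, Or.inl h2⟩
      · refine Or.inr ⟨h1, Or.inr ?_⟩
        exact tail_exch hT hmem (hsep d hd) hd (hmc ▸ hm) (fun h => hpe h.symm) h2
  · intro y hy
    simp only [Bad, Finset.mem_filter, Finset.mem_univ, true_and, Finset.mem_erase,
      Finset.mem_insert] at hy ⊢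
    obtain ⟨hy1, hy2 | ⟨hy2, hy3⟩⟩ := hy
    · exfalso
      rcases Sym2.eq_iff.1 hy2 with ⟨rfl, rfl⟩ | ⟨rfl, rfl⟩
      · have := hdw rfl; omega
      · omega
    · refine ⟨?_, hy1, hy3⟩
      rintro rfl
      exact hy2 rfl

lemma FlipSeq.refl {n : ℕ} (T : Finset (Edge n)) : FlipSeq T T 0 :=
  ⟨fun _ => T, rfl, rfl, fun i hi => absurd hi (by omega)⟩

lemma FlipSeq.cons {n : ℕ} {T T' T'' : Finset (Edge n)} {k : ℕ} (h : Flip T T')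
    (h' : FlipSeq T' T'' k) : FlipSeq T T'' (k + 1) := by
  obtain ⟨f, h0, hk, hf⟩ := h'
  refine ⟨fun i => if i = 0 then T else f (i - 1), by simp, by simpa using hk, ?_⟩
  intro i hi
  rcases i with _ | i
  · simpa [h0] using h
  · simpa using hf i (by omega)

lemma FlipSeq.trans {n : ℕ} {T T' T'' : Finset (Edge n)} {k l : ℕ} (h : FlipSeq T T' k)
    (h' : FlipSeq T' T'' l) : FlipSeq T T'' (k + l) := by
  induction k generalizing T with
  | zero =>
    obtain ⟨f, h0, hk, -⟩ := h
    rw [h0] at hk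
    subst hk
    simpa using h'
  | succ k ih =>
    obtain ⟨f, h0, hk, hf⟩ := h
    have h1 : FlipSeq (f 1) T' k := ⟨fun i => f (i + 1), rfl, hk, fun i hi => hf (i + 1) (by omega)⟩
    have h2 := (ih h1).cons (h0 ▸ hf 0 (by omega))
    rwa [show k + 1 + l = k + l + 1 by omega]

lemma Flip.symm {n : ℕ} {T T' : Finset (Edge n)} (h : Flip T T') : Flip T' T := by
  obtain ⟨h1, h2, e, he, f, hf, rfl⟩ := h
  refine ⟨h2, h1, f, Finset.mem_insert_self _ _, e, ?_, ?_⟩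
  · intro h
    rcases Finset.mem_insert.1 h with rfl | h
    · exact hf he
    · exact (Finset.notMem_erase _ _) h
  · rw [Finset.erase_insert (fun h => hf (Finset.mem_of_mem_erase h)), Finset.insert_erase he]

lemma FlipSeq.symm {n : ℕ} {T T' : Finset (Edge n)} {k : ℕ} (h : FlipSeq T T' k) :
    FlipSeq T' T k := by
  obtain ⟨f, h0, hk, hf⟩ := h
  refine ⟨fun i => f (k - i), by simpa using hk, by simpa using h0, fun i hi => ?_⟩
  have := (hf (k - (i + 1)) (by omega)).symm
  rwa [show k - (i + 1) + 1 = k - i by omega] at this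

lemma step_vertex_aux {n : ℕ} {r : Fin n → ℕ} (hr : PathRank r)
    (hb : ∀ u v a b, r v = r u + 1 → r u ≤ r a → r u ≤ r b → ¬ Cross s(u, v) s(a, b))
    (hB : ∀ u, r u + 1 < n → ∃ p, r u < r p ∧ ∀ e, ¬ Cross s(u, p) e)
    {T₂ : Finset (Edge n)} {w : Fin n} (m : ℕ) : ∀ T, FInv r T₂ (r w) T → (Bad r T w).card ≤ m →
    ∃ T', ∃ k ≤ m, FlipSeq T T' k ∧ FInv r T₂ (r w) T' ∧ Bad r T' w = ∅ := by
  induction m with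
  | zero =>
    intro T hI hc
    exact ⟨T, 0, le_rfl, FlipSeq.refl _, hI, Finset.card_eq_zero.1 (by omega)⟩
  | succ m ih =>
    intro T hI hc
    rcases (Bad r T w).eq_empty_or_nonempty with h | ⟨v, hv⟩
    · exact ⟨T, 0, by omega, FlipSeq.refl _, hI, h⟩
    · obtain ⟨T', hf, hI', hsub⟩ := step_edge hr hb hB hI hv
      have h1 := Finset.card_le_card hsub
      rw [Finset.card_erase_of_mem hv] at h1
      obtain ⟨T'', k, hk, hs, hI'', he⟩ := ih T' hI' (by omega)
      exact ⟨T'', k + 1, by omega, hs.cons hf, hI'', he⟩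

lemma bad_card {n : ℕ} {r : Fin n → ℕ} 
    {T₂ T : Finset (Edge n)} {w : Fin n} (hI : FInv r T₂ (r w) T) :
    (Bad r T w).card ≤ max (Fwd r T₂ w).card 1 := by
  obtain ⟨hT, hI⟩ := hI
  by_cases h : Bad r T w ⊆ Fwd r T₂ w
  · exact le_max_of_le_left (Finset.card_le_card h)
  · apply le_max_of_le_right
    rw [Finset.not_subset] at h
    obtain ⟨v, hv, hv2⟩ := h
    simp only [Bad, Fwd, Finset.mem_filter, Finset.mem_univ, true_and] at hv hv2
    have hmem := hv.2
    have ht : Tail r (T.erase s(w, v)) (r w + 1) := by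
      rcases hI w v hv.2 (by omega) with h | ⟨-, h | h⟩
      · omega
      · exact absurd ⟨by omega, h⟩ hv2
      · exact h
    have : Nonempty (Fin n) := ⟨w⟩
    rw [Finset.card_le_one_iff_subset_singleton]
    refine ⟨v, fun y hy => ?_⟩
    simp only [Bad, Finset.mem_filter, Finset.mem_univ, true_and, Finset.mem_singleton] at hy ⊢
    by_contra hne
    refine tree_bridge hT.1 hmem ?_
    have h1 : Rch (T.erase s(w, v)) w y := Rch.edge (Finset.mem_erase.2 ⟨by
      intro h
      rcases Sym2.eq_iff.1 h with ⟨_, h⟩ | ⟨h, h'⟩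
      · exact hne h
      · rw [h'] at hy; omega, hy.2⟩)
    exact h1.trans (ht y v (by omega) (by omega))

lemma step_vertex {n : ℕ} {r : Fin n → ℕ} (hr : PathRank r)
    (hb : ∀ u v a b, r v = r u + 1 → r u ≤ r a → r u ≤ r b → ¬ Cross s(u, v) s(a, b))
    (hB : ∀ u, r u + 1 < n → ∃ p, r u < r p ∧ ∀ e, ¬ Cross s(u, p) e)
    {T₂ T : Finset (Edge n)} {w : Fin n} (hI : FInv r T₂ (r w) T) :
    ∃ T', ∃ k ≤ max (Fwd r T₂ w).card 1, FlipSeq T T' k ∧ FInv r T₂ (r w + 1) T' := by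
  obtain ⟨T', k, hk, hs, hI', he⟩ := step_vertex_aux hr hb hB _ T hI (bad_card hI)
  refine ⟨T', k, hk, hs, hI'.1, fun u v huv hlt => ?_⟩
  rcases hI'.2 u v huv hlt with h | ⟨h1, h2⟩
  · left; omega
  · by_cases huw : r u = r w
    · left
      by_contra hcon
      have : v ∈ Bad r T' w := by
        have := hr.inj huw
        subst this
        simp only [Bad, Finset.mem_filter, Finset.mem_univ, true_and]
        exact ⟨by omega, huv⟩
      rw [he] at this
      simp at this
    · exact Or.inr ⟨by omega, h2⟩

lemma forward_bound {n : ℕ} {r : Fin n → ℕ} (hr : PathRank r)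
    (hb : ∀ u v a b, r v = r u + 1 → r u ≤ r a → r u ≤ r b → ¬ Cross s(u, v) s(a, b))
    (hB : ∀ u, r u + 1 < n → ∃ p, r u < r p ∧ ∀ e, ¬ Cross s(u, p) e)
    {T₂ : Finset (Edge n)} (h₂ : NCST T₂) :
    ∃ T, ∃ k ≤ ∑ w, max (Fwd r T₂ w).card 1, FlipSeq T₂ T k ∧ NCST T ∧
      ∀ u v, s(u, v) ∈ T → r u < r v → r v = r u + 1 := by
  have main : ∀ i ≤ n, ∃ T, ∃ k ≤ ∑ w ∈ Finset.univ.filter (fun w => r w < i),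
      max (Fwd r T₂ w).card 1, FlipSeq T₂ T k ∧ FInv r T₂ i T := by
    intro i
    induction i with
    | zero =>
      intro _
      exact ⟨T₂, 0, by simp, FlipSeq.refl _, h₂, fun u v huv _ => Or.inr ⟨by omega, Or.inl huv⟩⟩
    | succ i ih =>
      intro hi
      obtain ⟨T, k, hk, hs, hI⟩ := ih (by omega)
      obtain ⟨w, rfl⟩ := hr.surj i (by omega)
      obtain ⟨T', l, hl, hs', hI'⟩ := step_vertex hr hb hB hI
      refine ⟨T', k + l, ?_, hs.trans hs', hI'⟩
      have hset : Finset.univ.filter (fun w' => r w' < r w + 1) =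
          insert w (Finset.univ.filter (fun w' => r w' < r w)) := by
        ext y
        simp only [Finset.mem_filter, Finset.mem_univ, true_and, Finset.mem_insert]
        constructor
        · intro h
          by_cases hy : r y = r w
          · exact Or.inl (hr.inj hy)
          · right; omega
        · rintro (rfl | h) <;> omega
      rw [hset, Finset.sum_insert (by simp)]
      omega
  obtain ⟨T, k, hk, hs, hI⟩ := main n le_rfl
  refine ⟨T, k, ?_, hs, hI.1, fun u v huv hlt => ?_⟩
  · rwa [Finset.filter_true_of_mem (fun w _ => hr.lt w)] at hk
  · rcases hI.2 u v huv hlt with h | h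
    · exact h.2
    · have := hr.lt u; omega

/-- `a` lies strictly between `u` and `v`. -/
def Betw {n : ℕ} (u v a : Fin n) : Prop := (u < a ∧ a < v) ∨ (v < a ∧ a < u)

lemma cross_of_btw {n : ℕ} {u v a b : Fin n} (ha : Betw u v a) (hb : ¬ Betw u v b)
    (hbu : b ≠ u) (hbv : b ≠ v) : Cross s(u, v) s(a, b) := by
  have key : ∀ u v : Fin n, u < a → a < v → ¬ Betw u v b → b ≠ u → b ≠ v →
      Cross s(u, v) s(a, b) := by
    intro u v h1 h2 hb hbu hbv
    have : b < u ∨ v < b := by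
      unfold Betw at hb
      rw [Ne, Fin.ext_iff] at hbu hbv
      simp only [Fin.lt_def] at *
      omega
    rcases this with h | h
    · exact ⟨u, v, b, a, rfl, Sym2.eq_swap, h1.trans h2, h.trans h1, Or.inr ⟨h, h1, h2⟩⟩
    · exact ⟨u, v, a, b, rfl, rfl, h1.trans h2, h2.trans h, Or.inl ⟨h1, h2, h⟩⟩
  rcases ha with ⟨h1, h2⟩ | ⟨h1, h2⟩
  · exact key u v h1 h2 hb hbu hbv
  · rw [Sym2.eq_swap]
    exact key v u h1 h2 (fun h => hb (Or.symm h)) hbv hbu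

lemma btw_of_cross {n : ℕ} {u v a b : Fin n} (h : Cross s(u, v) s(a, b)) :
    a ≠ u ∧ a ≠ v ∧ b ≠ u ∧ b ≠ v ∧ ¬ (Betw u v a ↔ Betw u v b) := by
  obtain ⟨p, q, c, d, h1, h2, h3, h4, h5⟩ := h
  unfold Betw
  rcases Sym2.eq_iff.1 h1 with ⟨rfl, rfl⟩ | ⟨rfl, rfl⟩ <;>
  rcases Sym2.eq_iff.1 h2 with ⟨rfl, rfl⟩ | ⟨rfl, rfl⟩ <;>
  simp only [Ne, Fin.lt_def, Fin.ext_iff] at * <;>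
  omega

/-- A stretch of the path avoiding `u` and `v` stays on one side of `uv`. -/
lemma same_side {n : ℕ} {r : Fin n → ℕ} (hr : PathRank r) {u v : Fin n} (huv : r v = r u + 1)
    {lo : ℕ} (k : ℕ) : ∀ a b, r a = lo → r b = lo + k →
      (lo + k < r u ∨ r v < lo) → (Betw u v a ↔ Betw u v b) := by
  induction k with
  | zero =>
    intro a b ha hb _
    rw [hr.inj (show r a = r b by omega)]
  | succ k ih =>
    intro a b ha hb hlo
    obtain ⟨c, hc⟩ := hr.surj (lo + k) (by have := hr.lt b; omega)
    rw [ih a c ha hc (by omega)]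
    have h1 := hr.path u v c b huv (by omega)
    have ne : ∀ p q : Fin n, r p ≠ r q → p ≠ q := fun p q h h' => h (by rw [h'])
    constructor
    · intro h
      by_contra hn
      exact h1 (cross_of_btw h hn (ne _ _ (by omega)) (ne _ _ (by omega)))
    · intro h
      by_contra hn
      rw [Sym2.eq_swap (a := c)] at h1
      exact h1 (cross_of_btw h hn (ne _ _ (by omega)) (ne _ _ (by omega)))

lemma same_side' {n : ℕ} {r : Fin n → ℕ} (hr : PathRank r) {u v : Fin n} (huv : r v = r u + 1)
    (a b : Fin n) (h : (r a < r u ∧ r b < r u) ∨ (r v < r a ∧ r v < r b)) :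
    (Betw u v a ↔ Betw u v b) := by
  rcases le_total (r a) (r b) with hab | hab
  · exact same_side hr huv (r b - r a) a b rfl (by omega) (by omega)
  · exact (same_side hr huv (r a - r b) b a rfl (by omega) (by omega)).symm

lemma path_tail {n : ℕ} {r : Fin n → ℕ} (hr : PathRank r) :
    ∀ u v a b, r v = r u + 1 → r u ≤ r a → r u ≤ r b → ¬ Cross s(u, v) s(a, b) := by
  intro u v a b huv ha hb h
  obtain ⟨h1, h2, h3, h4, h5⟩ := btw_of_cross h
  have ne : ∀ p q : Fin n, p ≠ q → r p ≠ r q := fun p q h h' => h (hr.inj h')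
  have := ne _ _ h1
  have := ne _ _ h2
  have := ne _ _ h3
  have := ne _ _ h4
  exact h5 (same_side' hr huv a b (Or.inr ⟨by omega, by omega⟩))

lemma border_no_cross {n : ℕ} {u p : Fin n}
    (h : p.val = u.val + 1 ∨ u.val = p.val + 1 ∨ (u.val = 0 ∧ p.val + 1 = n) ∨
      (p.val = 0 ∧ u.val + 1 = n)) (e : Edge n) : ¬ Cross s(u, p) e := by
  rintro ⟨a, b, c, d, h1, h2, h3, h4, h5⟩
  have := a.isLt
  have := b.isLt
  have := c.isLt
  have := d.isLt
  rcases Sym2.eq_iff.1 h1 with ⟨rfl, rfl⟩ | ⟨rfl, rfl⟩ <;>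
  simp only [Fin.lt_def] at * <;>
  omega

lemma path_border {n : ℕ} {r : Fin n → ℕ} (hr : PathRank r) :
    ∀ u, r u + 1 < n → ∃ p, r u < r p ∧ ∀ e, ¬ Cross s(u, p) e := by
  intro u hu
  obtain ⟨v, hv⟩ := hr.surj (r u + 1) hu
  have hun := u.isLt
  have hvn := v.isLt
  obtain ⟨a, ha⟩ : ∃ a : Fin n, (u.val + 1 = n ∧ a.val = 0) ∨ (u.val + 1 < n ∧ a.val = u.val + 1) := by
    by_cases h : u.val + 1 = n
    · exact ⟨⟨0, by omega⟩, Or.inl ⟨h, rfl⟩⟩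
    · exact ⟨⟨u.val + 1, by omega⟩, Or.inr ⟨by omega, rfl⟩⟩
  obtain ⟨b, hb⟩ : ∃ b : Fin n, (u.val = 0 ∧ b.val + 1 = n) ∨ (u.val = b.val + 1) := by
    by_cases h : u.val = 0
    · exact ⟨⟨n - 1, by omega⟩, Or.inl ⟨h, by simp; omega⟩⟩
    · exact ⟨⟨u.val - 1, by omega⟩, Or.inr (by simp; omega)⟩
  have hca := border_no_cross (u := u) (p := a) (by omega)
  have hcb := border_no_cross (u := u) (p := b) (by omega)
  by_cases h1 : r u < r a
  · exact ⟨a, h1, hca⟩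
  by_cases h2 : r u < r b
  · exact ⟨b, h2, hcb⟩
  exfalso
  have ne : ∀ p q : Fin n, p.val ≠ q.val → r p ≠ r q := fun p q h h' => h (by rw [hr.inj h'])
  have ne' : ∀ p q : Fin n, r p ≠ r q → p.val ≠ q.val := fun p q h h' => h (by rw [Fin.ext h'])
  have hau := ne a u (by omega)
  have hbu := ne b u (by omega)
  have hva := ne' v a (by omega)
  have hvb := ne' v b (by omega)
  have hvu := ne' v u (by omega)
  have hs := same_side' hr hv a b (Or.inl ⟨by omega, by omega⟩)
  unfold Betw at hs
  simp only [Fin.lt_def] at hs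
  omega

lemma one_direction {n : ℕ} {r : Fin n → ℕ} (hr : PathRank r) {T₁ T₂ : Finset (Edge n)}
    (h₁ : NCST T₁) (h₂ : NCST T₂) (hp : ∀ u v, r v = r u + 1 → s(u, v) ∈ T₁) :
    ∃ k ≤ ∑ w, max (Fwd r T₂ w).card 1, FlipSeq T₁ T₂ k := by
  obtain ⟨T, k, hk, hs, hT, hpath⟩ := forward_bound hr (path_tail hr) (path_border hr) h₂
  refine ⟨k, hk, ?_⟩
  have hsub : T ⊆ T₁ := by
    intro e he
    obtain ⟨⟨p, q⟩, rfl⟩ := Quot.exists_rep e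
    change s(p, q) ∈ T at he
    change s(p, q) ∈ T₁
    rcases lt_trichotomy (r p) (r q) with h | h | h
    · exact hp _ _ (hpath p q he h)
    · have := hr.inj h
      subst this
      exact absurd (by simp) (hT.1.2.2 _ he)
    · rw [Sym2.eq_swap] at he ⊢
      exact hp _ _ (hpath q p he h)
  have : T = T₁ := Finset.eq_of_subset_of_card_le hsub (by rw [hT.1.2.1, h₁.1.2.1])
  subst this
  exact hs.symm

lemma PathRank.rev {n : ℕ} {r : Fin n → ℕ} (hr : PathRank r) :
    PathRank (fun v => n - 1 - r v) := by
  refine ⟨fun u v h => hr.inj ?_, fun v => ?_, fun i hi => ?_, fun u v u' v' h h' => ?_⟩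
  · have := hr.lt u
    have := hr.lt v
    change n - 1 - r u = n - 1 - r v at h
    omega
  · have := hr.lt v
    omega
  · obtain ⟨v, hv⟩ := hr.surj (n - 1 - i) (by omega)
    exact ⟨v, by omega⟩
  · have := hr.lt u
    have := hr.lt u'
    rw [Sym2.eq_swap (a := u), Sym2.eq_swap (a := u')]
    exact hr.path _ _ _ _ (by omega) (by omega)

lemma sum_bound {n : ℕ} {r : Fin n → ℕ} (hr : PathRank r) {T : Finset (Edge n)} (hT : NCST T) :
    ∑ w, max (Fwd r T w).card 1 + ∑ w, max (Fwd (fun v => n - 1 - r v) T w).card 1 ≤ 3 * n := by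
  classical
  have hne := hT.1.1.nonempty
  obtain ⟨G, hG⟩ : ∃ G, G = SimpleGraph.fromEdgeSet (T : Set (Edge n)) := ⟨_, rfl⟩
  have hconn : G.Connected := by rw [hG]; exact hT.1.1
  have hdeg : ∀ w, (Fwd r T w).card + (Fwd (fun v => n - 1 - r v) T w).card = G.degree w := by
    intro w
    rw [← SimpleGraph.card_neighborFinset_eq_degree, ← Finset.card_union_of_disjoint]
    · congr 1
      ext y
      simp only [Fwd, Finset.mem_union, Finset.mem_filter, Finset.mem_univ, true_and,
        SimpleGraph.mem_neighborFinset, hG, SimpleGraph.fromEdgeSet_adj, Finset.mem_coe]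
      have h1 := hr.lt w
      have h2 := hr.lt y
      constructor
      · rintro (⟨h, h'⟩ | ⟨h, h'⟩)
        · exact ⟨h', by rintro rfl; omega⟩
        · exact ⟨h', by rintro rfl; omega⟩
      · rintro ⟨h, h'⟩
        have : r w ≠ r y := fun h => h' (hr.inj h)
        rcases lt_or_gt_of_ne this with h3 | h3
        · exact Or.inl ⟨h3, h⟩
        · exact Or.inr ⟨by omega, h⟩
    · rw [Finset.disjoint_left]
      intro y hy hy'
      simp only [Fwd, Finset.mem_filter, Finset.mem_univ, true_and] at hy hy'
      have h2 := hr.lt y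
      omega
  have hsum : ∑ w, G.degree w ≤ 2 * (n - 1) := by
    have h0 := SimpleGraph.sum_degrees_eq_twice_card_edges G
    rw [h0, ← hT.1.2.1]
    apply Nat.mul_le_mul_left
    apply Finset.card_le_card
    intro e he
    have he' : e ∈ G.edgeSet := SimpleGraph.mem_edgeFinset.1 he
    rw [hG, SimpleGraph.edgeSet_fromEdgeSet] at he'
    exact he'.1
  rw [← Finset.sum_add_distrib]
  have hn : 0 < n := Fin.pos (Classical.arbitrary (Fin n))
  by_cases hn1 : n = 1
  · have : ∀ w ∈ Finset.univ, max (Fwd r T w).card 1 +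
        max (Fwd (fun v => n - 1 - r v) T w).card 1 ≤ G.degree w + 2 := by
      intro w _
      have := hdeg w
      omega
    refine (Finset.sum_le_sum this).trans ?_
    rw [Finset.sum_add_distrib, Finset.sum_const, Finset.card_univ, Fintype.card_fin,
      smul_eq_mul]
    omega
  · have : ∀ w ∈ Finset.univ, max (Fwd r T w).card 1 +
        max (Fwd (fun v => n - 1 - r v) T w).card 1 ≤ G.degree w + 1 := by
      intro w _
      have h1 := hdeg w
      have : Nontrivial (Fin n) := Fin.nontrivial_iff_two_le.2 (by omega)
      have h2 : 0 < G.degree w := hconn.preconnected.degree_pos_of_nontrivial w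
      omega
    refine (Finset.sum_le_sum this).trans ?_
    rw [Finset.sum_add_distrib, Finset.sum_const, Finset.card_univ, Fintype.card_fin,
      smul_eq_mul]
    omega

/-- If `T₁` is a (non-crossing) Hamiltonian path, there is a flip sequence between
`T₁` and `T₂` of length at most `(3/2) n`. -/
theorem hamiltonian_path_flip {n : ℕ} (T₁ T₂ : Finset (Edge n))
    (h₁ : NCST T₁) (h₂ : NCST T₂)
    (x : Fin n → Fin n) (hx : Function.Bijective x)
    (hham : T₁ = (Finset.univ.filter (fun i : Fin n => (i : ℕ) + 1 < n)).image
      (fun i => s(x i, x (next i)))) :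
    ∃ k : ℕ, FlipSeq T₁ T₂ k ∧ (k : ℝ) ≤ 3 * n / 2 := by 
  obtain ⟨y, hyx, hxy⟩ := Function.bijective_iff_has_inverse.1 hx
  have hcons : ∀ u v : Fin n, (y v : ℕ) = (y u : ℕ) + 1 → s(u, v) ∈ T₁ := by
    intro u v h
    rw [hham]
    refine Finset.mem_image.2 ⟨y u, ?_, ?_⟩
    · simp only [Finset.mem_filter, Finset.mem_univ, true_and]
      have := (y v).isLt
      omega
    · have h1 : next (y u) = y v := by
        apply Fin.ext
        simp only [next]
        rw [← h, Nat.mod_eq_of_lt (y v).isLt]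
      simp only [h1, hxy u, hxy v]
  have hr : PathRank (fun v : Fin n => (y v : ℕ)) := by
    refine ⟨fun u v h => hxy.injective (Fin.ext h), fun v => (y v).isLt,
      fun i hi => ⟨x ⟨i, hi⟩, by simp only [hyx ⟨i, hi⟩]⟩, fun u v u' v' h h' => ?_⟩
    exact h₁.2 _ (hcons u v h) _ (hcons u' v' h')
  obtain ⟨k, hk, hs⟩ := one_direction hr h₁ h₂ hcons
  obtain ⟨l, hl, hs'⟩ := one_direction hr.rev h₁ h₂ (fun u v h => by
    rw [Sym2.eq_swap]
    have := (y u).isLt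
    have := (y v).isLt
    exact hcons v u (by omega))
  have hb := sum_bound hr h₂
  have hkl : k + l ≤ 3 * n := by omega
  rcases le_total k l with h | h
  · refine ⟨k, hs, ?_⟩
    have : ((2 * k : ℕ) : ℝ) ≤ ((3 * n : ℕ) : ℝ) := Nat.cast_le.2 (by omega)
    push_cast at this
    linarith
  · refine ⟨l, hs', ?_⟩
    have : ((2 * l : ℕ) : ℝ) ≤ ((3 * n : ℕ) : ℝ) := Nat.cast_le.2 (by omega)
    push_cast at this
    linarith
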